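/- There is C > 0 such that for every integer n ≥ 1 and all x, y ∈ [−2·n^{2/3}, ∞) with x ≠ y, x ≠ 0, y ≠ 0: |K_Aiⁿ(x,y)| ≤ C·Ĝ_{−1/4,1/4,1}(x,y), and the derivative of y ↦ K_Aiⁿ(x,y) satisfies |∂_y K_Aiⁿ(x,y)| ≤ C·(Ĝ_{−1/4,1/4,2}(x,y) + Ĝ_{−3/4,1/4,1}(x,y)). -/

import Mathlib

open MeasureTheory Filter Set

noncomputable section

/-- The Airy function `Ai(x) = (1/π)·lim_{b→∞} ∫_0^b cos(t³/3 + x·t) dt`. -/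
def Ai (x : ℝ) : ℝ :=
  (1 / Real.pi) *
    limUnder Filter.atTop (fun b : ℝ => ∫ t in (0:ℝ)..b, Real.cos (t ^ 3 / 3 + x * t))

/-- The Airy kernel. -/
def KAi (x y : ℝ) : ℝ :=
  if x = y then (deriv Ai x) ^ 2 - x * (Ai x) ^ 2
  else (Ai x * deriv Ai y - deriv Ai x * Ai y) / (x - y)

/-- One-point correlation function of the Airy₂ random point field. -/
def rho (x : ℝ) : ℝ := (deriv Ai x) ^ 2 - x * (Ai x) ^ 2

/-- Probabilists' Hermite polynomial `Ĥ_m(x) = (−1)^m e^{x²/2} (d/dx)^m e^{−x²/2}`. -/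
def hermiteP (m : ℕ) (x : ℝ) : ℝ :=
  (-1 : ℝ) ^ m * Real.exp (x ^ 2 / 2) * iteratedDeriv m (fun t => Real.exp (-t ^ 2 / 2)) x

/-- Normalized oscillator function `φ_m`. -/
def osc (m : ℕ) (x : ℝ) : ℝ :=
  (2 * Real.pi) ^ (-(1:ℝ)/4) * ((m.factorial : ℝ)) ^ (-(1:ℝ)/2) *
    Real.exp (-x ^ 2 / 4) * hermiteP m x

/-- `ψ_mⁿ(x) = n^{1/12}·φ_m(2√n + n^{−1/6}·x)`. -/
def psiUp (n m : ℕ) (x : ℝ) : ℝ :=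
  (n : ℝ) ^ ((1:ℝ)/12) * osc m (2 * Real.sqrt n + (n : ℝ) ^ (-(1:ℝ)/6) * x)

/-- `ψ_n = ψ_nⁿ`. -/
def psiN (n : ℕ) : ℝ → ℝ := psiUp n n

/-- The finite-`n` Airy kernel. -/
def KAiN (n : ℕ) (x y : ℝ) : ℝ :=
  if x = y then
    (deriv (psiN n) x) ^ 2 - psiN n x * deriv (deriv (psiN n)) x
      - (1 / (2 * (n : ℝ) ^ ((1:ℝ)/3))) * (psiN n x) ^ 2
  else
    (psiN n x * deriv (psiN n) y - deriv (psiN n) x * psiN n y) / (x - y)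
      - (1 / (2 * (n : ℝ) ^ ((1:ℝ)/3))) * (psiN n x * psiN n y)

/-- `(εf)(x) = (1/2)·∫_ℝ sign(x − y)·f(y) dy`. -/
def epsF (f : ℝ → ℝ) (x : ℝ) : ℝ := (1/2) * ∫ y : ℝ, Real.sign (x - y) * f y

/-- `εψ_n`. -/
def epsPsi (n : ℕ) : ℝ → ℝ := epsF (psiN n)

/-- `J₁(x,y) = K_Ai(x,y) + (1/2)·Ai(x)·(1 − ∫_y^∞ Ai(u) du)`. -/
def J1 (x y : ℝ) : ℝ := KAi x y + (1/2) * Ai x * (1 - ∫ u in Set.Ioi y, Ai u)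

/-- Scalar part of the quaternion product of Airy₁ kernels. -/
def L1 (x y : ℝ) : ℝ :=
  J1 x y * J1 y x -
    deriv (fun v => J1 x v) y * ((∫ u in x..y, J1 u x) - (1/2) * Real.sign (y - x))

/-- `J₁ⁿ(x,y) = K_Aiⁿ(x,y) + (1/2)·ψ_{n−1}ⁿ(x)·(εψ_n)(y)`. -/
def J1N (n : ℕ) (x y : ℝ) : ℝ :=
  KAiN n x y + (1/2) * psiUp n (n - 1) x * epsPsi n y

/-- Scalar part of the quaternion product of finite-`n` Airy₁ kernels. -/
def L1N (n : ℕ) (x y : ℝ) : ℝ :=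
  J1N n x y * J1N n y x -
    deriv (fun v => J1N n x v) y * ((∫ u in x..y, J1N n u x) - (1/2) * Real.sign (y - x))

/-- `ρ̂(x) = (1/π)·√(−x)` for `x < 0`, and `0` otherwise. -/
def rhoHat (x : ℝ) : ℝ := if x < 0 then Real.sqrt (-x) / Real.pi else 0

/-- `ρ̂ⁿ(x) = (1/π)·√(−x·(1 + x/(4·n^{2/3})))` on `(−4n^{2/3}, 0)`, and `0` otherwise. -/
def rhoHatN (n : ℕ) (x : ℝ) : ℝ :=
  if -(4 * (n : ℝ) ^ ((2:ℝ)/3)) < x ∧ x < 0 then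
    Real.sqrt (-x * (1 + x / (4 * (n : ℝ) ^ ((2:ℝ)/3)))) / Real.pi
  else 0

/-- `G_{a,b,c}(x,y) = |x|^{−a}·|y|^{−b}·|x−y|^{−c}`. -/
def Gf (a b c : ℝ) (x y : ℝ) : ℝ := |x| ^ (-a) * |y| ^ (-b) * |x - y| ^ (-c)

/-- `Ĝ_{a,b,c}(x,y) = G_{a,b,c}(x,y) + G_{a,b,c}(y,x)`. -/
def Ghat (a b c : ℝ) (x y : ℝ) : ℝ := Gf a b c x y + Gf a b c y x

/-- Soft-edge one-point correlation function of the `n`-point GUE ensemble. -/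
def rhoN (n : ℕ) (x : ℝ) : ℝ :=
  (deriv (psiN n) x) ^ 2 - (x ^ 2 / (4 * (n : ℝ) ^ ((2:ℝ)/3)) + x) * (psiN n x) ^ 2

end

/-!
With `h = n^{-1/3}`, the function `ψ_n` solves `f'' = (x + h²x²/4 - h/2) f`, a perturbation of
Airy's equation `f'' = x f`. On `[-2/h², -2]` the solution oscillates, and its Liouville–Green (WKB)
energy is controlled from the left end, which is the origin of the Hermite variable and where the
values of the oscillator functions are known. Grönwall's inequality carries the bounds across the
turning point, on `[-2, 3]`, and since `ψ_n` decays at `+∞` it decays exponentially beyond.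
Altogether `|ψ_n| ≲ (1 + |x|)^{-1/4}` and `|ψ_n'| ≲ (1 + |x|)^{1/4}` uniformly in `n`.

The kernel and its derivative are bounded by comparing each product of such factors with `Ĝ`. The
term with the factor `h` lacks the denominator `x - y`; this is supplied by `|x - y| ≤ |x| + |y|`
and `h |x| ≲ (1 + |x|)^{1/2}`, which is valid in the oscillatory range.
-/

open scoped Topology

/-! ### Second-order linear equations on the line -/

section SecondOrderLinearODE

variable {f f' p q q' q'' : ℝ → ℝ} {s : Set ℝ} {a b x : ℝ}

theorem antitoneOn_of_hasDerivAt_nonpos (hs : Convex ℝ s) (hf : ∀ x ∈ s, HasDerivAt f (f' x) x)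
    (hf' : ∀ x ∈ s, f' x ≤ 0) : AntitoneOn f s :=
  antitoneOn_of_hasDerivWithinAt_nonpos hs (fun x hx ↦ (hf x hx).continuousAt.continuousWithinAt)
    (fun x hx ↦ (hf x (interior_subset hx)).hasDerivWithinAt) fun x hx ↦ hf' x (interior_subset hx)

/-- The Liouville–Green energy `√q · f² + f'² / √q`: to leading order the squared amplitude of a
solution of `f'' = -q f`, which the WKB approximation predicts to be constant. -/
noncomputable def liouvilleGreenEnergy (q f f' : ℝ → ℝ) (x : ℝ) : ℝ :=
  √(q x) * f x ^ 2 + f' x ^ 2 / √(q x)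

/-- The function `q' / (2 q^{3/2}) = -(1/√q)'`, whose size measures how slowly `q` varies on the
scale of one oscillation of `f'' = -q f`; the derivative `q'` is passed as an argument. -/
noncomputable def liouvilleGreenSlope (q q' : ℝ → ℝ) (x : ℝ) : ℝ := q' x / (2 * √(q x) ^ 3)

/-- The Liouville–Green energy with the first-order correction that removes all terms but one from
its derivative along `f'' = -q f`. -/
noncomputable def correctedEnergy (q q' f f' : ℝ → ℝ) (x : ℝ) : ℝ :=
  liouvilleGreenEnergy q f f' x + liouvilleGreenSlope q q' x * (f x * f' x)

theorem liouvilleGreenEnergy_nonneg : 0 ≤ liouvilleGreenEnergy q f f' x := by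
  unfold liouvilleGreenEnergy
  positivity

theorem abs_mul_le_liouvilleGreenEnergy (hq : 0 < q x) :
    |f x * f' x| ≤ liouvilleGreenEnergy q f f' x / 2 := by
  have : 0 < √(q x) := Real.sqrt_pos.2 hq
  have hE : liouvilleGreenEnergy q f f' x = ((√(q x) * |f x|) ^ 2 + |f' x| ^ 2) / √(q x) := by
    simp only [liouvilleGreenEnergy, mul_pow, sq_abs]
    field_simp
  rw [hE, abs_mul, div_div, le_div_iff₀ (by positivity)]
  linarith [two_mul_le_add_sq (√(q x) * |f x|) |f' x|]

theorem abs_correctedEnergy_sub_le (hq : 0 < q x) (hg : |liouvilleGreenSlope q q' x| ≤ 1 / 2) :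
    |correctedEnergy q q' f f' x - liouvilleGreenEnergy q f f' x| ≤
      liouvilleGreenEnergy q f f' x / 4 := by
  rw [correctedEnergy, add_sub_cancel_left, abs_mul]
  calc _ ≤ 1 / 2 * (liouvilleGreenEnergy q f f' x / 2) := by
        gcongr
        exact abs_mul_le_liouvilleGreenEnergy hq
    _ = _ := by ring

theorem hasDerivAt_liouvilleGreenSlope (hq : HasDerivAt q (q' x) x)
    (hq' : HasDerivAt q' (q'' x) x) (hpos : 0 < q x) :
    HasDerivAt (liouvilleGreenSlope q q')
      (q'' x / (2 * √(q x) ^ 3) - 3 * q' x ^ 2 / (4 * √(q x) ^ 5)) x := by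
  have : 0 < √(q x) := Real.sqrt_pos.2 hpos
  refine (hq'.fun_div (((hq.sqrt hpos.ne').fun_pow 3).const_mul 2) (by positivity)).congr_deriv ?_
  field_simp
  ring

theorem hasDerivAt_correctedEnergy {g' : ℝ} (hf : HasDerivAt f (f' x) x)
    (hf' : HasDerivAt f' (-q x * f x) x) (hq : HasDerivAt q (q' x) x) (hpos : 0 < q x)
    (hg : HasDerivAt (liouvilleGreenSlope q q') g' x) :
    HasDerivAt (correctedEnergy q q' f f') (g' * (f x * f' x)) x := by
  have hr : 0 < √(q x) := Real.sqrt_pos.2 hpos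
  have hr' := hq.sqrt hpos.ne'
  refine (((hr'.fun_mul (hf.fun_pow 2)).fun_add ((hf'.fun_pow 2).fun_div hr' hr.ne')).fun_add
    (hg.fun_mul (hf.fun_mul hf'))).congr_deriv ?_
  have hrq : q x = √(q x) ^ 2 := (Real.sq_sqrt hpos.le).symm
  simp only [liouvilleGreenSlope]
  generalize √(q x) = r at *
  rw [hrq]
  field_simp
  ring

/-- With `E`, `F` the plain and corrected energies and `g` the slope, `g' ≤ 0`, `|f f'| ≤ E/2` and
`E ≤ (4/3) F` give `F' = g' f f' ≤ -(2/3) g' F`. -/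
theorem antitoneOn_correctedEnergy_mul_exp (hs : Convex ℝ s)
    (hf : ∀ x ∈ s, HasDerivAt f (f' x) x) (hf' : ∀ x ∈ s, HasDerivAt f' (-q x * f x) x)
    (hq : ∀ x ∈ s, HasDerivAt q (q' x) x) (hq' : ∀ x ∈ s, HasDerivAt q' (q'' x) x)
    (hpos : ∀ x ∈ s, 0 < q x) (hconcave : ∀ x ∈ s, q'' x ≤ 0)
    (hslope : ∀ x ∈ s, |liouvilleGreenSlope q q' x| ≤ 1 / 2) :
    AntitoneOn
      (fun x ↦ correctedEnergy q q' f f' x * Real.exp (2 / 3 * liouvilleGreenSlope q q' x)) s := by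
  have hg x (hx : x ∈ s) := hasDerivAt_liouvilleGreenSlope (hq x hx) (hq' x hx) (hpos x hx)
  refine antitoneOn_of_hasDerivAt_nonpos hs (fun x hx ↦ (hasDerivAt_correctedEnergy (hf x hx)
    (hf' x hx) (hq x hx) (hpos x hx) (hg x hx)).fun_mul ((hg x hx).const_mul (2 / 3)).exp) ?_
  intro x hx
  set g' := q'' x / (2 * √(q x) ^ 3) - 3 * q' x ^ 2 / (4 * √(q x) ^ 5)
  have hg'_nonpos : g' ≤ 0 :=
    sub_nonpos_of_le <| (div_nonpos_of_nonpos_of_nonneg (hconcave x hx) (by positivity)).trans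
      (by positivity)
  have h_dominates : 0 ≤ f x * f' x + 2 / 3 * correctedEnergy q q' f f' x := by
    linarith [(abs_le.1 (abs_mul_le_liouvilleGreenEnergy (f := f) (f' := f') (hpos x hx))).1,
      (abs_le.1 (abs_correctedEnergy_sub_le (f := f) (f' := f') (hpos x hx) (hslope x hx))).1]
  calc _ = g' * (f x * f' x + 2 / 3 * correctedEnergy q q' f f' x) *
        Real.exp (2 / 3 * liouvilleGreenSlope q q' x) := by ring
    _ ≤ 0 := mul_nonpos_of_nonpos_of_nonneg
      (mul_nonpos_of_nonpos_of_nonneg hg'_nonpos h_dominates) (Real.exp_nonneg _)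

theorem liouvilleGreenEnergy_le_five_mul (hs : Convex ℝ s)
    (hf : ∀ x ∈ s, HasDerivAt f (f' x) x) (hf' : ∀ x ∈ s, HasDerivAt f' (-q x * f x) x)
    (hq : ∀ x ∈ s, HasDerivAt q (q' x) x) (hq' : ∀ x ∈ s, HasDerivAt q' (q'' x) x)
    (hpos : ∀ x ∈ s, 0 < q x) (hconcave : ∀ x ∈ s, q'' x ≤ 0)
    (hslope : ∀ x ∈ s, |liouvilleGreenSlope q q' x| ≤ 1 / 2) (ha : a ∈ s) (hx : x ∈ s)
    (hax : a ≤ x) :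
    liouvilleGreenEnergy q f f' x ≤ 5 * liouvilleGreenEnergy q f f' a := by
  set E := liouvilleGreenEnergy q f f'
  set F := correctedEnergy q q' f f'
  set g := liouvilleGreenSlope q q'
  have hE_nonneg : 0 ≤ E a := liouvilleGreenEnergy_nonneg
  have hF_lower : 3 / 4 * E x ≤ F x := by
    linarith [(abs_le.1 (abs_correctedEnergy_sub_le (f := f) (f' := f') (hpos x hx)
      (hslope x hx))).1]
  have hF_upper : F a ≤ 5 / 4 * E a := by
    linarith [(abs_le.1 (abs_correctedEnergy_sub_le (f := f) (f' := f') (hpos a ha)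
      (hslope a ha))).2]
  have hF_le : F x * Real.exp (2 / 3 * g x) ≤ F a * Real.exp (2 / 3 * g a) :=
    antitoneOn_correctedEnergy_mul_exp hs hf hf' hq hq' hpos hconcave hslope ha hx hax
  have hg_diff : 2 / 3 * g a - 2 / 3 * g x ≤ 1 := by
    linarith [(abs_le.1 (hslope x hx)).1, (abs_le.1 (hslope a ha)).2]
  have h_exp : Real.exp (2 / 3 * g a - 2 / 3 * g x) ≤ 3 :=
    (Real.exp_le_exp.2 hg_diff).trans Real.exp_one_lt_three.le
  have key : 3 / 4 * E x ≤ 15 / 4 * E a :=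
    calc 3 / 4 * E x ≤ F x := hF_lower
      _ ≤ F a * Real.exp (2 / 3 * g a) / Real.exp (2 / 3 * g x) := by
          rwa [le_div_iff₀ (Real.exp_pos _)]
      _ = F a * Real.exp (2 / 3 * g a - 2 / 3 * g x) := by rw [Real.exp_sub, mul_div_assoc]
      _ ≤ 5 / 4 * E a * 3 := by gcongr
      _ = 15 / 4 * E a := by ring
  linarith

theorem norm_prodMk_le_mul_exp {K : ℝ} (hK : 1 ≤ K) (hf : ∀ x ∈ Icc a b, HasDerivAt f (f' x) x)
    (hf' : ∀ x ∈ Icc a b, HasDerivAt f' (p x * f x) x) (hp : ∀ x ∈ Icc a b, |p x| ≤ K)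
    (hx : x ∈ Icc a b) : ‖(f x, f' x)‖ ≤ ‖(f a, f' a)‖ * Real.exp (K * (x - a)) := by
  have h_deriv y (hy : y ∈ Icc a b) :
      HasDerivAt (fun y ↦ (f y, f' y)) (f' y, p y * f y) y := (hf y hy).prodMk (hf' y hy)
  rw [← gronwallBound_ε0]
  refine norm_le_gronwallBound_of_norm_deriv_right_le
    (fun y hy ↦ (h_deriv y hy).continuousAt.continuousWithinAt)
    (fun y hy ↦ (h_deriv y (Ico_subset_Icc_self hy)).hasDerivWithinAt) le_rfl ?_ x hx
  intro y hy
  have hpy := hp y (Ico_subset_Icc_self hy)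
  rw [add_zero, Prod.norm_mk, norm_mul]
  refine max_le ?_ ?_
  · exact (norm_snd_le (f y, f' y)).trans (le_mul_of_one_le_left (norm_nonneg _) hK)
  · exact mul_le_mul hpy (norm_fst_le (f y, f' y)) (norm_nonneg _) (by positivity)

section Decaying

variable (hf : ∀ x ∈ Ici a, HasDerivAt f (f' x) x)
  (hf' : ∀ x ∈ Ici a, HasDerivAt f' (p x * f x) x)
  (hf_lim : Tendsto f atTop (𝓝 0)) (hf'_lim : Tendsto f' atTop (𝓝 0))

include hf hf' hf_lim hf'_lim

theorem mul_deriv_nonpos_of_tendsto_zero (hp : ∀ x ∈ Ici a, 0 ≤ p x) (hx : x ∈ Ici a) :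
    f x * f' x ≤ 0 := by
  have h_anti : AntitoneOn (fun x ↦ -(f x * f' x)) (Ici a) := by
    refine antitoneOn_of_hasDerivAt_nonpos (convex_Ici a)
      (fun x hx ↦ ((hf x hx).fun_mul (hf' x hx)).fun_neg) fun x hx ↦ ?_
    have := mul_nonneg (hp x hx) (sq_nonneg (f x))
    linarith [sq_nonneg (f' x)]
  have h_lim : Tendsto (fun x ↦ -(f x * f' x)) atTop (𝓝 0) := by
    simpa using (hf_lim.mul hf'_lim).neg
  rw [← neg_nonneg]
  exact le_of_tendsto h_lim <| (eventually_ge_atTop x).mono fun y hy ↦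
    h_anti hx (mem_Ici.2 (le_trans hx hy)) hy

theorem abs_deriv_antitoneOn_of_tendsto_zero (hp : ∀ x ∈ Ici a, 0 ≤ p x) :
    AntitoneOn (fun x ↦ |f' x|) (Ici a) := by
  have h_sq : AntitoneOn (fun x ↦ f' x * f' x) (Ici a) := by
    refine antitoneOn_of_hasDerivAt_nonpos (convex_Ici a)
      (fun x hx ↦ (hf' x hx).fun_mul (hf' x hx)) fun x hx ↦ ?_
    have := mul_nonpos_of_nonneg_of_nonpos (hp x hx)
      (mul_deriv_nonpos_of_tendsto_zero hf hf' hf_lim hf'_lim hp hx)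
    linarith
  exact fun x hx y hy hxy ↦ abs_le_iff_mul_self_le.2 (h_sq hx hy hxy)

theorem mul_abs_le_abs_deriv_of_tendsto_zero {κ : ℝ} (hp : ∀ x ∈ Ici a, κ ^ 2 ≤ p x)
    (hx : x ∈ Ici a) : κ * |f x| ≤ |f' x| := by
  have hp_nonneg : ∀ x ∈ Ici a, 0 ≤ p x := fun x hx ↦ (sq_nonneg κ).trans (hp x hx)
  have h_anti : AntitoneOn (fun x ↦ f' x * f' x - κ ^ 2 * (f x * f x)) (Ici a) := by
    refine antitoneOn_of_hasDerivAt_nonpos (convex_Ici a)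
      (fun x hx ↦ ((hf' x hx).fun_mul (hf' x hx)).fun_sub
        (((hf x hx).fun_mul (hf x hx)).const_mul (κ ^ 2))) fun x hx ↦ ?_
    have := mul_nonpos_of_nonneg_of_nonpos (sub_nonneg.2 (hp x hx))
      (mul_deriv_nonpos_of_tendsto_zero hf hf' hf_lim hf'_lim hp_nonneg hx)
    linarith
  have h_lim : Tendsto (fun x ↦ f' x * f' x - κ ^ 2 * (f x * f x)) atTop (𝓝 0) := by
    simpa using (hf'_lim.mul hf'_lim).sub ((hf_lim.mul hf_lim).const_mul (κ ^ 2))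
  have h_nonneg : 0 ≤ f' x * f' x - κ ^ 2 * (f x * f x) :=
    le_of_tendsto h_lim <| (eventually_ge_atTop x).mono fun y hy ↦
      h_anti hx (mem_Ici.2 (le_trans hx hy)) hy
  refine le_of_sq_le_sq ?_ (abs_nonneg _)
  rw [mul_pow, sq_abs, sq_abs]
  linarith

theorem abs_mul_exp_antitoneOn_of_tendsto_zero {κ : ℝ} (hp : ∀ x ∈ Ici a, κ ^ 2 ≤ p x) :
    AntitoneOn (fun x ↦ |f x| * Real.exp (κ * x)) (Ici a) := by
  have h_sq : AntitoneOn (fun x ↦ f x * f x * Real.exp (2 * κ * x)) (Ici a) := by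
    refine antitoneOn_of_hasDerivAt_nonpos (convex_Ici a) (fun x hx ↦ ((hf x hx).fun_mul
      (hf x hx)).fun_mul ((hasDerivAt_id' x).const_mul (2 * κ)).exp) fun x hx ↦ ?_
    have h_nonpos := mul_deriv_nonpos_of_tendsto_zero hf hf' hf_lim hf'_lim
      (fun x hx ↦ (sq_nonneg κ).trans (hp x hx)) hx
    have h_dom : κ * (f x * f x) ≤ -(f x * f' x) := by
      rw [← abs_of_nonpos h_nonpos, abs_mul, ← abs_mul_abs_self (f x)]
      linarith [mul_le_mul_of_nonneg_left
        (mul_abs_le_abs_deriv_of_tendsto_zero hf hf' hf_lim hf'_lim hp hx) (abs_nonneg (f x))]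
    have := mul_nonneg (Real.exp_nonneg (2 * κ * x))
      (by linarith : 0 ≤ -(f x * f' x + κ * (f x * f x)))
    linarith
  have h_eq x : f x * f x * Real.exp (2 * κ * x) = (f x * Real.exp (κ * x)) ^ 2 := by
    rw [mul_pow, ← Real.exp_nat_mul]
    push_cast
    ring_nf
  simp only [h_eq] at h_sq
  intro x hx y hy hxy
  simpa only [abs_mul, Real.abs_exp] using sq_le_sq.1 (h_sq hx hy hxy)

theorem abs_le_mul_exp_neg_of_tendsto_zero {κ : ℝ} (hp : ∀ x ∈ Ici a, κ ^ 2 ≤ p x)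
    (hx : x ∈ Ici a) : |f x| ≤ |f a| * Real.exp (-(κ * (x - a))) := by
  have h := abs_mul_exp_antitoneOn_of_tendsto_zero hf hf' hf_lim hf'_lim hp self_mem_Ici hx hx
  have h_exp : Real.exp (-(κ * (x - a))) = Real.exp (κ * a) / Real.exp (κ * x) := by
    rw [← Real.exp_sub]
    ring_nf
  rwa [h_exp, ← mul_div_assoc, le_div_iff₀ (Real.exp_pos _)]

/-- By the mean value theorem `f x - f (x - 1)` is a value of `f'` to the left of `x`, and `|f'|`
decreases. -/
theorem abs_deriv_le_mul_exp_neg_of_tendsto_zero {κ : ℝ} (hκ : 0 ≤ κ)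
    (hp : ∀ x ∈ Ici a, κ ^ 2 ≤ p x) (hx : a + 1 ≤ x) :
    |f' x| ≤ 2 * |f a| * Real.exp (-(κ * (x - 1 - a))) := by
  have hx_mem : x ∈ Ici a := by rw [mem_Ici]; linarith
  have hx_sub_mem : x - 1 ∈ Ici a := by rw [mem_Ici]; linarith
  obtain ⟨ξ, hξ, h_slope⟩ := exists_hasDerivAt_eq_slope f f' (sub_one_lt x)
    (fun y hy ↦ (hf y (le_trans hx_sub_mem hy.1)).continuousAt.continuousWithinAt)
    fun y hy ↦ hf y (le_trans hx_sub_mem hy.1.le)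
  have h_decay y (hy : y ∈ Ici a) :=
    abs_le_mul_exp_neg_of_tendsto_zero hf hf' hf_lim hf'_lim hp hy
  calc |f' x| ≤ |f' ξ| := abs_deriv_antitoneOn_of_tendsto_zero hf hf' hf_lim hf'_lim
        (fun x hx ↦ (sq_nonneg κ).trans (hp x hx)) (le_trans hx_sub_mem hξ.1.le) hx_mem hξ.2.le
    _ = |f x - f (x - 1)| := by rw [h_slope, sub_sub_cancel, div_one]
    _ ≤ |f x| + |f (x - 1)| := abs_sub _ _
    _ ≤ |f a| * Real.exp (-(κ * (x - a))) + |f a| * Real.exp (-(κ * (x - 1 - a))) :=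
        add_le_add (h_decay x hx_mem) (h_decay (x - 1) hx_sub_mem)
    _ ≤ |f a| * Real.exp (-(κ * (x - 1 - a))) + |f a| * Real.exp (-(κ * (x - 1 - a))) := by
        gcongr
        linarith
    _ = 2 * |f a| * Real.exp (-(κ * (x - 1 - a))) := by ring

end Decaying

end SecondOrderLinearODE

/-! ### The oscillator equation in soft-edge coordinates -/

/-- The weight `(1 + |x|)^{1/4}`: solutions of Airy-type equations are at most of the order of its
inverse, and their derivatives at most of the order of the weight itself. -/
noncomputable def quarterWeight (x : ℝ) : ℝ := (1 + |x|) ^ ((1 : ℝ) / 4)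

theorem one_le_quarterWeight (x : ℝ) : 1 ≤ quarterWeight x :=
  Real.one_le_rpow (by linarith [abs_nonneg x]) (by norm_num)

theorem quarterWeight_pos (x : ℝ) : 0 < quarterWeight x :=
  zero_lt_one.trans_le (one_le_quarterWeight x)

theorem rpow_one_quarter_pow_four {s : ℝ} (hs : 0 ≤ s) : (s ^ ((1 : ℝ) / 4)) ^ 4 = s := by
  rw [← Real.rpow_mul_natCast hs]
  norm_num

theorem quarterWeight_pow_four (x : ℝ) : quarterWeight x ^ 4 = 1 + |x| :=
  rpow_one_quarter_pow_four (by positivity)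

/-- The potential of the harmonic oscillator equation in soft-edge coordinates at scale
`h = n^{-1/3}`. It is an `O(h)` perturbation of the Airy potential `x` on compact sets. -/
noncomputable def softEdgePotential (h x : ℝ) : ℝ := x + h ^ 2 * x ^ 2 / 4 - h / 2

theorem hasDerivAt_softEdgePotential (h x : ℝ) :
    HasDerivAt (softEdgePotential h) (1 + h ^ 2 * x / 2) x := by
  refine (((hasDerivAt_id' x).fun_add ((((hasDerivAt_id' x).fun_pow 2).const_mul
    (h ^ 2)).div_const 4)).sub_const (h / 2)).congr_deriv ?_
  norm_num
  ring

theorem hasDerivAt_deriv_softEdgePotential (h x : ℝ) :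
    HasDerivAt (fun x ↦ 1 + h ^ 2 * x / 2) (h ^ 2 / 2) x := by
  simpa using (((hasDerivAt_id' x).const_mul (h ^ 2)).div_const 2).const_add 1

section PotentialBounds

variable {h x : ℝ}

theorem sq_mul_abs_le_two (hh : 0 < h) (hx : -(2 / h ^ 2) ≤ x) (hx_nonpos : x ≤ 0) :
    h ^ 2 * |x| ≤ 2 := by
  rw [abs_of_nonpos hx_nonpos, mul_comm, ← le_div_iff₀ (by positivity)]
  linarith

theorem half_abs_le_neg_softEdgePotential (hh : 0 < h) (hx : -(2 / h ^ 2) ≤ x)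
    (hx_nonpos : x ≤ 0) : |x| / 2 ≤ -softEdgePotential h x := by
  have h_quad : h ^ 2 * |x| * |x| ≤ 2 * |x| := by
    gcongr
    exact sq_mul_abs_le_two hh hx hx_nonpos
  rw [abs_of_nonpos hx_nonpos] at h_quad ⊢
  unfold softEdgePotential
  linarith

theorem neg_softEdgePotential_le (hx_nonpos : x ≤ 0) (hh_le : h ≤ 1) :
    -softEdgePotential h x ≤ |x| + 1 := by
  have := sq_nonneg (h * x)
  rw [abs_of_nonpos hx_nonpos]
  unfold softEdgePotential
  linarith

theorem abs_softEdgePotential_le (hh : 0 < h) (hh_le : h ≤ 1) :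
    |softEdgePotential h x| ≤ |x| + h ^ 2 * |x| * |x| / 4 + 1 / 2 := by
  have h_quad : h ^ 2 * |x| * |x| = h ^ 2 * x ^ 2 := by rw [← sq_abs x]; ring
  have h_quad_nonneg : 0 ≤ h ^ 2 * x ^ 2 := by positivity
  rw [h_quad, softEdgePotential, abs_le]
  constructor <;> linarith [neg_abs_le x, le_abs_self x]

end PotentialBounds

/-- The pair `(f, f')` is a solution of `f'' = softEdgePotential h · f` and its derivative, both
decaying at `+∞` and bounded as the oscillator functions are at `-2/h²`, the centre of symmetry of
the potential. -/
structure IsSoftEdgeSolution (h : ℝ) (f f' : ℝ → ℝ) : Prop where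
  scale_pos : 0 < h
  scale_le_one : h ≤ 1
  hasDerivAt (x : ℝ) : HasDerivAt f (f' x) x
  hasDerivAt_deriv (x : ℝ) : HasDerivAt f' (softEdgePotential h x * f x) x
  tendsto_zero : Tendsto f atTop (𝓝 0)
  tendsto_deriv_zero : Tendsto f' atTop (𝓝 0)
  sq_center_le : f (-(2 / h ^ 2)) ^ 2 ≤ h
  deriv_sq_center_le : f' (-(2 / h ^ 2)) ^ 2 ≤ 1 / h

/-- Airy-type bounds at `x`, with constant `C`, for a solution of `f'' = softEdgePotential h · f`
and its derivative. The last two gain a factor `h |x|` at the cost of `(1 + |x|)^{1/2}`. -/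
structure AiryBounds (C h : ℝ) (f f' : ℝ → ℝ) (x : ℝ) : Prop where
  abs_mul_weight_le : |f x| * quarterWeight x ≤ C
  abs_deriv_le : |f' x| ≤ C * quarterWeight x
  abs_potential_mul_le : |softEdgePotential h x * f x| ≤ C * quarterWeight x ^ 3
  scale_mul_abs_le : h * |x| * |f x| ≤ C * quarterWeight x
  scale_mul_abs_deriv_le : h * |x| * |f' x| ≤ C * quarterWeight x ^ 3

namespace AiryBounds

variable {C C' h x : ℝ} {f f' : ℝ → ℝ}

theorem mono (hb : AiryBounds C h f f' x) (hC : C ≤ C') : AiryBounds C' h f f' x := by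
  have hw := quarterWeight_pos x
  exact
    { abs_mul_weight_le := hb.abs_mul_weight_le.trans hC
      abs_deriv_le := hb.abs_deriv_le.trans (by gcongr)
      abs_potential_mul_le := hb.abs_potential_mul_le.trans (by gcongr)
      scale_mul_abs_le := hb.scale_mul_abs_le.trans (by gcongr)
      scale_mul_abs_deriv_le := hb.scale_mul_abs_deriv_le.trans (by gcongr) }

theorem const_nonneg (hb : AiryBounds C h f f' x) : 0 ≤ C :=
  (mul_nonneg (abs_nonneg _) (quarterWeight_pos x).le).trans hb.abs_mul_weight_le

theorem of_amplitude (hh : 0 < h) (hh_le : h ≤ 1) (hx : h ^ 2 * |x| ≤ 3)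
    (hf : |f x| * quarterWeight x ≤ C) (hf' : |f' x| ≤ C * quarterWeight x) :
    AiryBounds (2 * C) h f f' x := by
  have hw := quarterWeight_pos x
  have hw4 := quarterWeight_pow_four x
  set w := quarterWeight x
  have hC : 0 ≤ C := (by positivity : 0 ≤ |f x| * w).trans hf
  have h_scale : h * w ^ 2 ≤ 2 := by
    refine le_of_sq_le_sq ?_ zero_le_two
    calc (h * w ^ 2) ^ 2 = h ^ 2 + h ^ 2 * |x| := by linear_combination h ^ 2 * hw4
      _ ≤ 1 ^ 2 + 3 := by gcongr
      _ = 2 ^ 2 := by norm_num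
  have h_abs : |x| ≤ w ^ 4 := by linarith
  have h_potential : |softEdgePotential h x| ≤ 2 * w ^ 4 := by
    have := abs_softEdgePotential_le (x := x) hh hh_le
    have := mul_le_mul_of_nonneg_right hx (abs_nonneg x)
    linarith [abs_nonneg x]
  constructor
  · linarith
  · linarith [mul_nonneg hC hw.le]
  · calc |softEdgePotential h x * f x| = |softEdgePotential h x| * |f x| := abs_mul _ _
      _ ≤ 2 * w ^ 4 * |f x| := by gcongr
      _ = 2 * (|f x| * w) * w ^ 3 := by ring
      _ ≤ 2 * C * w ^ 3 := by gcongr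
  · calc h * |x| * |f x| ≤ h * w ^ 4 * |f x| := by gcongr
      _ = h * w ^ 2 * (|f x| * w) * w := by ring
      _ ≤ 2 * C * w := by gcongr
  · calc h * |x| * |f' x| ≤ h * w ^ 4 * (C * w) := by gcongr
      _ = h * w ^ 2 * C * w ^ 3 := by ring
      _ ≤ 2 * C * w ^ 3 := by gcongr

theorem of_decay (hh : 0 < h) (hh_le : h ≤ 1) (hf : (1 + |x|) ^ 2 * |f x| ≤ C)
    (hf' : (1 + |x|) ^ 2 * |f' x| ≤ C) : AiryBounds C h f f' x := by
  have hw := one_le_quarterWeight x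
  have hw_pos := quarterWeight_pos x
  have hw4 := quarterWeight_pow_four x
  set w := quarterWeight x
  have hC : 0 ≤ C := (by positivity : 0 ≤ (1 + |x|) ^ 2 * |f x|).trans hf
  have h_weight : w ≤ (1 + |x|) ^ 2 := by
    calc w ≤ w ^ 8 := le_self_pow₀ hw (by norm_num)
      _ = (1 + |x|) ^ 2 := by rw [← hw4]; ring
  have h_scale : h * |x| ≤ (1 + |x|) ^ 2 := by
    nlinarith [mul_le_mul_of_nonneg_right hh_le (abs_nonneg x), abs_nonneg x]
  have h_potential : |softEdgePotential h x| ≤ (1 + |x|) ^ 2 := by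
    have h_quad : h ^ 2 * |x| * |x| ≤ 1 ^ 2 * |x| * |x| := by gcongr
    nlinarith [abs_softEdgePotential_le (x := x) hh hh_le, abs_nonneg x]
  have h_one : 1 ≤ (1 + |x|) ^ 2 := one_le_pow₀ (by linarith [abs_nonneg x])
  constructor
  · calc |f x| * w ≤ |f x| * (1 + |x|) ^ 2 := by gcongr
      _ ≤ C := by rwa [mul_comm]
  · calc |f' x| ≤ (1 + |x|) ^ 2 * |f' x| := le_mul_of_one_le_left (abs_nonneg _) h_one
      _ ≤ C := hf'
      _ ≤ C * w := le_mul_of_one_le_right hC hw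
  · calc |softEdgePotential h x * f x| = |softEdgePotential h x| * |f x| := abs_mul _ _
      _ ≤ (1 + |x|) ^ 2 * |f x| := by gcongr
      _ ≤ C := hf
      _ ≤ C * w ^ 3 := le_mul_of_one_le_right hC (one_le_pow₀ hw)
  · calc h * |x| * |f x| ≤ (1 + |x|) ^ 2 * |f x| := by gcongr
      _ ≤ C := hf
      _ ≤ C * w := le_mul_of_one_le_right hC hw
  · calc h * |x| * |f' x| ≤ (1 + |x|) ^ 2 * |f' x| := by gcongr
      _ ≤ C := hf'
      _ ≤ C * w ^ 3 := le_mul_of_one_le_right hC (one_le_pow₀ hw)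

end AiryBounds

namespace IsSoftEdgeSolution

variable {h x : ℝ} {f f' : ℝ → ℝ}

theorem liouvilleGreenEnergy_center_le (hs : IsSoftEdgeSolution h f f') :
    liouvilleGreenEnergy (fun x ↦ -softEdgePotential h x) f f' (-(2 / h ^ 2)) ≤ 3 := by
  have hh := hs.scale_pos
  have hh_le := hs.scale_le_one
  have hq : -softEdgePotential h (-(2 / h ^ 2)) = (1 / h) ^ 2 + h / 2 := by
    unfold softEdgePotential
    field_simp
    ring
  have h_lower : 1 / h ≤ √((1 / h) ^ 2 + h / 2) := Real.le_sqrt_of_sq_le (by linarith)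
  have h_upper : √((1 / h) ^ 2 + h / 2) ≤ 2 / h := by
    rw [Real.sqrt_le_left (by positivity)]
    have : 1 ≤ (1 / h) ^ 2 := one_le_pow₀ (by rwa [le_div_iff₀ hh, one_mul])
    linarith [div_pow 2 h 2, div_pow 1 h 2, (by ring : (2 / h) ^ 2 = 4 * (1 / h) ^ 2)]
  simp only [liouvilleGreenEnergy, hq]
  calc _ ≤ 2 / h * h + 1 / h / (1 / h) := by
        gcongr
        exacts [hs.sq_center_le, hs.deriv_sq_center_le]
    _ = 3 := by field_simp; norm_num

theorem liouvilleGreenEnergy_le (hs : IsSoftEdgeSolution h f f') (hx : -(2 / h ^ 2) ≤ x)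
    (hx_le : x ≤ -2) :
    liouvilleGreenEnergy (fun x ↦ -softEdgePotential h x) f f' x ≤ 15 := by
  have hh := hs.scale_pos
  have hq_lower : ∀ y ∈ Icc (-(2 / h ^ 2)) (-2), 1 ≤ -softEdgePotential h y := by
    intro y ⟨hy, hy_le⟩
    have := half_abs_le_neg_softEdgePotential hh hy (by linarith)
    rw [abs_of_nonpos (by linarith)] at this
    linarith
  have h_slope : ∀ y ∈ Icc (-(2 / h ^ 2)) (-2), |liouvilleGreenSlope
      (fun x ↦ -softEdgePotential h x) (fun x ↦ -(1 + h ^ 2 * x / 2)) y| ≤ 1 / 2 := by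
    intro y hy
    have h_sqrt : 1 ≤ √(-softEdgePotential h y) := Real.one_le_sqrt.2 (hq_lower y hy)
    have h_num : |-(1 + h ^ 2 * y / 2)| ≤ 1 := by
      have hy_nonpos : y ≤ 0 := by linarith [hy.2]
      have := sq_mul_abs_le_two hh hy.1 hy_nonpos
      rw [abs_of_nonpos hy_nonpos] at this
      have := mul_nonneg (sq_nonneg h) (neg_nonneg.2 hy_nonpos)
      rw [abs_le]
      constructor <;> linarith
    rw [liouvilleGreenSlope, abs_div, abs_of_nonneg (by positivity : 0 ≤ 2 * √_ ^ 3)]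
    gcongr
    linarith [one_le_pow₀ h_sqrt (n := 3)]
  have h_energy := liouvilleGreenEnergy_le_five_mul (convex_Icc (-(2 / h ^ 2)) (-2))
    (fun y _ ↦ hs.hasDerivAt y) (fun y _ ↦ by simpa using hs.hasDerivAt_deriv y)
    (fun y _ ↦ (hasDerivAt_softEdgePotential h y).fun_neg)
    (fun y _ ↦ (hasDerivAt_deriv_softEdgePotential h y).fun_neg)
    (fun y hy ↦ zero_lt_one.trans_le (hq_lower y hy)) (fun y _ ↦ neg_nonpos.2 (by positivity))
    h_slope (left_mem_Icc.2 (hx.trans hx_le)) ⟨hx, hx_le⟩ hx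
  linarith [hs.liouvilleGreenEnergy_center_le]

theorem amplitude_le_of_le_neg_two (hs : IsSoftEdgeSolution h f f') (hx : -(2 / h ^ 2) ≤ x)
    (hx_le : x ≤ -2) : |f x| * quarterWeight x ≤ 6 ∧ |f' x| ≤ 6 * quarterWeight x := by
  have hx_nonpos : x ≤ 0 := by linarith
  have h_energy := hs.liouvilleGreenEnergy_le hx hx_le
  have hq_lower := half_abs_le_neg_softEdgePotential hs.scale_pos hx hx_nonpos
  have hq_upper := neg_softEdgePotential_le hx_nonpos hs.scale_le_one
  have hw_pos := quarterWeight_pos x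
  have hw4 := quarterWeight_pow_four x
  unfold liouvilleGreenEnergy at h_energy
  set w := quarterWeight x
  set q := -softEdgePotential h x
  have h_two_le : 2 ≤ |x| := by rw [abs_of_nonpos hx_nonpos]; linarith
  have h_sqrt_lower : w ^ 2 / 2 ≤ √q := by
    refine Real.le_sqrt_of_sq_le ?_
    linarith [(by ring : (w ^ 2 / 2) ^ 2 = w ^ 4 / 4)]
  have h_sqrt_upper : √q ≤ w ^ 2 := by
    rw [Real.sqrt_le_left (by positivity)]
    linarith [(by ring : (w ^ 2) ^ 2 = w ^ 4)]
  have h_sqrt_pos : 0 < √q := lt_of_lt_of_le (by positivity) h_sqrt_lower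
  constructor
  · have hf : √q * f x ^ 2 ≤ 15 := by
      linarith [(by positivity : 0 ≤ f' x ^ 2 / √q)]
    refine le_of_sq_le_sq ?_ (by norm_num)
    rw [mul_pow, sq_abs]
    linarith [mul_le_mul_of_nonneg_right h_sqrt_lower (sq_nonneg (f x))]
  · have hf' : f' x ^ 2 ≤ 15 * √q := by
      rw [← div_le_iff₀ h_sqrt_pos]
      linarith [(by positivity : 0 ≤ √q * f x ^ 2)]
    refine le_of_sq_le_sq ?_ (by positivity)
    rw [sq_abs, mul_pow]
    linarith [sq_nonneg w]

theorem airyBounds_of_le_neg_two (hs : IsSoftEdgeSolution h f f') (hx : -(2 / h ^ 2) ≤ x)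
    (hx_le : x ≤ -2) : AiryBounds 12 h f f' x := by
  have h_amplitude := hs.amplitude_le_of_le_neg_two hx hx_le
  have hx_scale := sq_mul_abs_le_two hs.scale_pos hx (by linarith)
  exact (AiryBounds.of_amplitude hs.scale_pos hs.scale_le_one (by linarith) h_amplitude.1
    h_amplitude.2).mono (by norm_num)

theorem norm_neg_two_le (hs : IsSoftEdgeSolution h f f') : ‖(f (-2), f' (-2))‖ ≤ 18 := by
  have h_center : -(2 / h ^ 2) ≤ -2 := by
    rw [neg_le_neg_iff, le_div_iff₀ (pow_pos hs.scale_pos 2)]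
    linarith [pow_le_one₀ hs.scale_pos.le hs.scale_le_one (n := 2)]
  obtain ⟨hf, hf'⟩ := hs.amplitude_le_of_le_neg_two h_center le_rfl
  have hw := one_le_quarterWeight (-2)
  have hw_le : quarterWeight (-2) ≤ 3 :=
    calc quarterWeight (-2) ≤ quarterWeight (-2) ^ 4 := le_self_pow₀ hw (by norm_num)
      _ = 3 := by rw [quarterWeight_pow_four]; norm_num
  rw [Prod.norm_mk, Real.norm_eq_abs, Real.norm_eq_abs]
  exact max_le (by linarith [le_mul_of_one_le_right (abs_nonneg (f (-2))) hw]) (by linarith)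

theorem norm_le_of_mem_Icc (hs : IsSoftEdgeSolution h f f') (hx : x ∈ Icc (-2) 3) :
    ‖(f x, f' x)‖ ≤ 18 * Real.exp 30 := by
  have h_potential : ∀ y ∈ Icc (-2 : ℝ) 3, |softEdgePotential h y| ≤ 6 := by
    intro y hy
    have hy_abs : |y| ≤ 3 := abs_le.2 ⟨by linarith [hy.1], hy.2⟩
    have h_quad : h ^ 2 * |y| * |y| ≤ 1 ^ 2 * 3 * 3 := by
      have := hs.scale_pos
      gcongr
      exact hs.scale_le_one
    linarith [abs_softEdgePotential_le (x := y) hs.scale_pos hs.scale_le_one]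
  calc ‖(f x, f' x)‖ ≤ ‖(f (-2), f' (-2))‖ * Real.exp (6 * (x - -2)) :=
        norm_prodMk_le_mul_exp (by norm_num) (fun y _ ↦ hs.hasDerivAt y)
          (fun y _ ↦ hs.hasDerivAt_deriv y) h_potential hx
    _ ≤ 18 * Real.exp 30 := by
        gcongr
        exacts [hs.norm_neg_two_le, by linarith [hx.2]]

theorem airyBounds_of_mem_Icc (hs : IsSoftEdgeSolution h f f') (hx : x ∈ Icc (-2) 3) :
    AiryBounds (72 * Real.exp 30) h f f' x := by
  have h_norm := hs.norm_le_of_mem_Icc hx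
  have hf : |f x| ≤ 18 * Real.exp 30 := (norm_fst_le (f x, f' x)).trans h_norm
  have hf' : |f' x| ≤ 18 * Real.exp 30 := (norm_snd_le (f x, f' x)).trans h_norm
  have hx_abs : |x| ≤ 3 := abs_le.2 ⟨by linarith [hx.1], hx.2⟩
  have hx_scale : h ^ 2 * |x| ≤ 1 * 3 := by
    gcongr
    exact pow_le_one₀ hs.scale_pos.le hs.scale_le_one
  have hw := one_le_quarterWeight x
  have hw_le : quarterWeight x ≤ 2 := by
    refine le_of_pow_le_pow_left₀ four_ne_zero zero_le_two ?_
    rw [quarterWeight_pow_four]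
    linarith
  have h_amplitude := AiryBounds.of_amplitude (f := f) (f' := f') (C := 18 * Real.exp 30 * 2)
    hs.scale_pos hs.scale_le_one (by linarith) (by gcongr)
    (by linarith [mul_le_mul_of_nonneg_left hw (Real.exp_nonneg 30), Real.exp_nonneg 30])
  exact h_amplitude.mono (by linarith)

theorem airyBounds_of_three_le (hs : IsSoftEdgeSolution h f f') (hx : 3 ≤ x) :
    AiryBounds (72 * Real.exp 34) h f f' x := by
  have h_potential : ∀ y ∈ Ici (2 : ℝ), (1 : ℝ) ^ 2 ≤ softEdgePotential h y := by
    intro y hy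
    have := sq_nonneg (h * y)
    unfold softEdgePotential
    linarith [mem_Ici.1 hy, hs.scale_le_one]
  have hf_two : |f 2| ≤ 18 * Real.exp 30 :=
    (norm_fst_le (f 2, f' 2)).trans (hs.norm_le_of_mem_Icc (by norm_num))
  have hf : |f x| ≤ |f 2| * Real.exp (-(1 * (x - 2))) :=
    abs_le_mul_exp_neg_of_tendsto_zero (fun y _ ↦ hs.hasDerivAt y)
      (fun y _ ↦ hs.hasDerivAt_deriv y) hs.tendsto_zero hs.tendsto_deriv_zero h_potential
      (mem_Ici.2 (by linarith))
  have hf' : |f' x| ≤ 2 * |f 2| * Real.exp (-(1 * (x - 1 - 2))) :=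
    abs_deriv_le_mul_exp_neg_of_tendsto_zero (fun y _ ↦ hs.hasDerivAt y)
      (fun y _ ↦ hs.hasDerivAt_deriv y) hs.tendsto_zero hs.tendsto_deriv_zero zero_le_one
      h_potential (by linarith)
  have h_weight : (1 + |x|) ^ 2 ≤ 2 * Real.exp (1 + x) := by
    rw [abs_of_nonneg (by linarith)]
    have := Real.pow_div_factorial_le_exp (x := 1 + x) (by linarith) 2
    rw [Nat.factorial_two, Nat.cast_two, div_le_iff₀ two_pos] at this
    linarith
  have h_decay : ∀ {v : ℝ}, |v| ≤ 2 * |f 2| * Real.exp (3 - x) →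
      (1 + |x|) ^ 2 * |v| ≤ 72 * Real.exp 34 := fun {v} hv ↦
    calc (1 + |x|) ^ 2 * |v|
        ≤ 2 * Real.exp (1 + x) * (2 * (18 * Real.exp 30) * Real.exp (3 - x)) := by
          gcongr
          exact hv.trans (by gcongr)
      _ = 72 * (Real.exp (1 + x) * Real.exp 30 * Real.exp (3 - x)) := by ring
      _ = 72 * Real.exp 34 := by rw [← Real.exp_add, ← Real.exp_add]; ring_nf
  refine AiryBounds.of_decay hs.scale_pos hs.scale_le_one (h_decay (hf.trans ?_))
    (h_decay (hf'.trans_eq (by ring_nf)))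
  gcongr ?_ * Real.exp ?_ <;> linarith [abs_nonneg (f 2)]

theorem airyBounds (hs : IsSoftEdgeSolution h f f') (hx : -(2 / h ^ 2) ≤ x) :
    AiryBounds (72 * Real.exp 34) h f f' x := by
  rcases le_total x (-2) with hx_left | hx_left
  · exact (hs.airyBounds_of_le_neg_two hx hx_left).mono (by
      linarith [Real.one_le_exp (by norm_num : (0 : ℝ) ≤ 34)])
  rcases le_total x 3 with hx_right | hx_right
  · exact (hs.airyBounds_of_mem_Icc ⟨hx_left, hx_right⟩).mono (by gcongr; norm_num)
  · exact hs.airyBounds_of_three_le hx_right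

end IsSoftEdgeSolution

/-! ### Bounds on kernels of Christoffel–Darboux type -/

/-- With `a`, `b` the quarter powers of `|x|`, `|y|`, this is the factor of
`Ĝ_{-k/4,1/4,c}(x,y)` that multiplies `|x-y|^{-c}`. -/
noncomputable def powRatio (k : ℕ) (a b : ℝ) : ℝ := a ^ k / b + b ^ k / a

theorem powRatio_comm (k : ℕ) (a b : ℝ) : powRatio k a b = powRatio k b a := add_comm _ _

/-- The Christoffel–Darboux kernel `(f ⊗ f' - f' ⊗ f) / (x - y) - (h/2) f ⊗ f` of a soft-edge
solution; for `f = ψ_n` and `h = n^{-1/3}` it is `K_Aiⁿ` off the diagonal. -/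
noncomputable def edgeKernel (h : ℝ) (f f' : ℝ → ℝ) (x y : ℝ) : ℝ :=
  (f x * f' y - f' x * f y) / (x - y) - h / 2 * (f x * f y)

section PowRatio

variable {a b : ℝ}

theorem two_le_powRatio_one (ha : 0 < a) (hb : 0 < b) : 2 ≤ powRatio 1 a b := by
  rw [powRatio, div_add_div _ _ hb.ne' ha.ne', le_div_iff₀ (by positivity)]
  linarith [two_mul_le_add_sq a b]

theorem powRatio_three_eq (ha : a ≠ 0) (hb : b ≠ 0) :
    powRatio 3 a b = (a ^ 4 + b ^ 4) / (a * b) := by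
  unfold powRatio
  field_simp

theorem mul_le_powRatio_three (ha : 0 < a) (hb : 0 < b) : a * b ≤ powRatio 3 a b := by
  rw [powRatio_three_eq ha.ne' hb.ne', le_div_iff₀ (by positivity)]
  linarith [two_mul_le_add_sq (a ^ 2) (b ^ 2), sq_nonneg (a * b)]

theorem one_le_powRatio_one_div_add {r : ℝ} (ha : 0 < a) (hb : 0 < b) (hr : 0 < r)
    (hr_le : r ≤ a ^ 4 + b ^ 4) : 1 ≤ powRatio 1 a b / r + powRatio 3 a b := by
  have h_one := two_le_powRatio_one ha hb
  have h_three : 0 ≤ powRatio 3 a b := by unfold powRatio; positivity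
  rcases le_total r 2 with hr_two | hr_two
  · have : 1 ≤ powRatio 1 a b / r := by
      rw [le_div_iff₀ hr]
      linarith
    linarith
  · have h_sq : 1 ≤ powRatio 3 a b ^ 2 := by
      rw [powRatio_three_eq ha.ne' hb.ne', div_pow, le_div_iff₀ (by positivity), one_mul]
      nlinarith [two_mul_le_add_sq (a ^ 2) (b ^ 2)]
    have : 1 ≤ powRatio 3 a b := (one_le_sq_iff₀ h_three).1 h_sq
    linarith [(by positivity : 0 ≤ powRatio 1 a b / r)]

variable {α β : ℝ}

/-- Passing to `1 + α⁴`, `1 + β⁴` moves the larger ratio of the two quarter powers towards `1`. -/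
theorem powRatio_one_le_two_mul (hα : 0 < α) (hβ : 0 < β) (ha : 0 < a) (hb : 0 < b)
    (ha4 : a ^ 4 = 1 + α ^ 4) (hb4 : b ^ 4 = 1 + β ^ 4) :
    powRatio 1 a b ≤ 2 * powRatio 1 α β := by
  wlog hαβ : α ≤ β generalizing a b α β
  · rw [powRatio_comm, powRatio_comm 1 α]
    exact this hβ hα hb ha hb4 ha4 (le_of_not_ge hαβ)
  have h_pow : α ^ 4 ≤ β ^ 4 := by gcongr
  have hab : a ≤ b := le_of_pow_le_pow_left₀ four_ne_zero hb.le (by linarith)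
  have h_cross : b * α ≤ β * a := by
    refine le_of_pow_le_pow_left₀ four_ne_zero (by positivity) ?_
    rw [mul_pow, mul_pow, ha4, hb4]
    linarith
  have h_small : a / b ≤ 1 := div_le_one_of_le₀ hab hb.le
  have h_large : b / a ≤ β / α := by rwa [div_le_div_iff₀ ha hα]
  have h_two := two_le_powRatio_one hα hβ
  simp only [powRatio, pow_one] at h_two ⊢
  linarith [div_nonneg hα.le hβ.le, div_nonneg hβ.le hα.le]

theorem powRatio_three_le_two_add (hα : 0 < α) (hβ : 0 < β) (ha : 1 ≤ a) (hb : 1 ≤ b)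
    (ha4 : a ^ 4 = 1 + α ^ 4) (hb4 : b ^ 4 = 1 + β ^ 4) :
    powRatio 3 a b ≤ 2 + powRatio 3 α β := by
  have hαa : α ≤ a := le_of_pow_le_pow_left₀ four_ne_zero (by positivity) (by linarith)
  have hβb : β ≤ b := le_of_pow_le_pow_left₀ four_ne_zero (by positivity) (by linarith)
  rw [powRatio_three_eq (by positivity) (by positivity), powRatio_three_eq hα.ne' hβ.ne']
  calc (a ^ 4 + b ^ 4) / (a * b) = 2 / (a * b) + (α ^ 4 + β ^ 4) / (a * b) := by
        rw [ha4, hb4]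
        ring
    _ ≤ 2 / 1 + (α ^ 4 + β ^ 4) / (α * β) := by
        gcongr
        exact one_le_mul_of_one_le_of_one_le ha hb
    _ = 2 + (α ^ 4 + β ^ 4) / (α * β) := by rw [div_one]

end PowRatio

section Ghat

variable {x y : ℝ}

theorem Ghat_nonneg (a b c x y : ℝ) : 0 ≤ Ghat a b c x y := by
  unfold Ghat Gf
  positivity

theorem rpow_natCast_div_four {s : ℝ} (hs : 0 ≤ s) (k : ℕ) :
    s ^ ((k : ℝ) / 4) = (s ^ ((1 : ℝ) / 4)) ^ k := by
  rw [← Real.rpow_mul_natCast hs, one_div_mul_eq_div]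

theorem Ghat_eq_powRatio_mul (k : ℕ) (c x y : ℝ) : Ghat (-(k : ℝ) / 4) (1 / 4) c x y =
    powRatio k (|x| ^ ((1 : ℝ) / 4)) (|y| ^ ((1 : ℝ) / 4)) * |x - y| ^ (-c) := by
  simp only [Ghat, Gf, powRatio, neg_div, neg_neg, abs_sub_comm y x,
    Real.rpow_neg (abs_nonneg x) (1 / 4), Real.rpow_neg (abs_nonneg y) (1 / 4),
    rpow_natCast_div_four (abs_nonneg x), rpow_natCast_div_four (abs_nonneg y)]
  ring

theorem powRatio_one_quarterWeight_mul_le (c : ℝ) (hx : x ≠ 0) (hy : y ≠ 0) :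
    powRatio 1 (quarterWeight x) (quarterWeight y) * |x - y| ^ (-c) ≤
      2 * Ghat (-1 / 4) (1 / 4) c x y := by
  have hα := rpow_one_quarter_pow_four (abs_nonneg x)
  have hβ := rpow_one_quarter_pow_four (abs_nonneg y)
  have h_Ghat := Ghat_eq_powRatio_mul 1 c x y
  rw [Nat.cast_one] at h_Ghat
  rw [h_Ghat, ← mul_assoc]
  gcongr
  exact powRatio_one_le_two_mul (by positivity) (by positivity) (quarterWeight_pos x)
    (quarterWeight_pos y) (by rw [quarterWeight_pow_four, hα]) (by rw [quarterWeight_pow_four, hβ])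

theorem powRatio_three_quarterWeight_mul_le (hx : x ≠ 0) (hy : y ≠ 0) (hxy : x ≠ y) :
    powRatio 3 (quarterWeight x) (quarterWeight y) * |x - y| ^ (-1 : ℝ) ≤
      2 * Ghat (-1 / 4) (1 / 4) 2 x y + 3 * Ghat (-3 / 4) (1 / 4) 1 x y := by
  have hα : (|x| ^ ((1 : ℝ) / 4)) ^ 4 = |x| := rpow_one_quarter_pow_four (abs_nonneg x)
  have hβ : (|y| ^ ((1 : ℝ) / 4)) ^ 4 = |y| := rpow_one_quarter_pow_four (abs_nonneg y)
  have h_Ghat_one := Ghat_eq_powRatio_mul 1 2 x y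
  have h_Ghat_three := Ghat_eq_powRatio_mul 3 1 x y
  rw [Nat.cast_one] at h_Ghat_one
  rw [Nat.cast_ofNat] at h_Ghat_three
  have h_dist : 0 < |x - y| := abs_pos.2 (sub_ne_zero.2 hxy)
  have hα_pos : 0 < |x| ^ ((1 : ℝ) / 4) := by positivity
  have hβ_pos : 0 < |y| ^ ((1 : ℝ) / 4) := by positivity
  have h_dist_sq : |x - y| ^ (-2 : ℝ) = |x - y| ^ (-1 : ℝ) / |x - y| := by
    rw [← Real.rpow_sub_one h_dist.ne']
    norm_num
  rw [h_Ghat_one, h_Ghat_three, h_dist_sq]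
  set α := |x| ^ ((1 : ℝ) / 4)
  set β := |y| ^ ((1 : ℝ) / 4)
  have h_weight : powRatio 3 (quarterWeight x) (quarterWeight y) ≤ 2 + powRatio 3 α β :=
    powRatio_three_le_two_add hα_pos hβ_pos (one_le_quarterWeight x) (one_le_quarterWeight y)
      (by rw [quarterWeight_pow_four, hα]) (by rw [quarterWeight_pow_four, hβ])
  have h_one : 1 ≤ powRatio 1 α β / |x - y| + powRatio 3 α β :=
    one_le_powRatio_one_div_add hα_pos hβ_pos h_dist (by rw [hα, hβ]; exact abs_sub x y)
  calc powRatio 3 (quarterWeight x) (quarterWeight y) * |x - y| ^ (-1 : ℝ)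
      ≤ (2 * (powRatio 1 α β / |x - y| + powRatio 3 α β) + powRatio 3 α β) *
          |x - y| ^ (-1 : ℝ) := by gcongr; linarith
    _ = _ := by ring

end Ghat

section EdgeKernel

variable {C h x y : ℝ} {f f' : ℝ → ℝ}

theorem hasDerivAt_edgeKernel (hf : HasDerivAt f (f' y) y)
    (hf' : HasDerivAt f' (softEdgePotential h y * f y) y) (hxy : x ≠ y) :
    HasDerivAt (edgeKernel h f f' x)
      ((f x * (softEdgePotential h y * f y) - f' x * f' y) / (x - y) +
        (f x * f' y - f' x * f y) / (x - y) ^ 2 - h / 2 * (f x * f' y)) y := by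
  have h_sub : x - y ≠ 0 := sub_ne_zero.2 hxy
  refine ((((hf'.const_mul (f x)).fun_sub (hf.const_mul (f' x))).fun_div
    ((hasDerivAt_id' y).const_sub x) h_sub).fun_sub
      ((hf.const_mul (f x)).const_mul (h / 2))).congr_deriv ?_
  field_simp
  ring

namespace AiryBounds

theorem abs_le_div (hb : AiryBounds C h f f' x) : |f x| ≤ C / quarterWeight x :=
  (le_div_iff₀ (quarterWeight_pos x)).2 hb.abs_mul_weight_le

theorem abs_wronskian_le (hx : AiryBounds C h f f' x) (hy : AiryBounds C h f f' y) :
    |f x * f' y - f' x * f y| ≤ C ^ 2 * powRatio 1 (quarterWeight x) (quarterWeight y) := by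
  have := quarterWeight_pos x
  have := quarterWeight_pos y
  have := hx.const_nonneg
  calc |f x * f' y - f' x * f y| ≤ |f x| * |f' y| + |f' x| * |f y| := by
        rw [← abs_mul, ← abs_mul]
        exact abs_sub _ _
    _ ≤ C / quarterWeight x * (C * quarterWeight y) +
          C * quarterWeight x * (C / quarterWeight y) := by
        gcongr
        exacts [hx.abs_le_div, hy.abs_deriv_le, hx.abs_deriv_le, hy.abs_le_div]
    _ = _ := by unfold powRatio; ring

theorem abs_potential_wronskian_le (hx : AiryBounds C h f f' x) (hy : AiryBounds C h f f' y) :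
    |f x * (softEdgePotential h y * f y) - f' x * f' y| ≤
      2 * C ^ 2 * powRatio 3 (quarterWeight x) (quarterWeight y) := by
  have ha := quarterWeight_pos x
  have hb := quarterWeight_pos y
  have hC := hx.const_nonneg
  have h_ratio := mul_le_powRatio_three ha hb
  calc |f x * (softEdgePotential h y * f y) - f' x * f' y|
      ≤ |f x| * |softEdgePotential h y * f y| + |f' x| * |f' y| := by
        rw [← abs_mul, ← abs_mul (f' x)]
        exact abs_sub _ _
    _ ≤ C / quarterWeight x * (C * quarterWeight y ^ 3) +
          C * quarterWeight x * (C * quarterWeight y) := by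
        gcongr
        exacts [hx.abs_le_div, hy.abs_potential_mul_le, hx.abs_deriv_le, hy.abs_deriv_le]
    _ = C ^ 2 * (quarterWeight y ^ 3 / quarterWeight x + quarterWeight x * quarterWeight y) := by
        ring
    _ ≤ C ^ 2 * (powRatio 3 (quarterWeight x) (quarterWeight y) +
          powRatio 3 (quarterWeight x) (quarterWeight y)) := by
        gcongr
        exact le_add_of_nonneg_left (by positivity)
    _ = _ := by ring

theorem scale_mul_abs_sub_mul_abs_mul_le (hh : 0 ≤ h) (hx : AiryBounds C h f f' x)
    (hy : AiryBounds C h f f' y) : h * |x - y| * |f x * f y| ≤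
      C ^ 2 * powRatio 1 (quarterWeight x) (quarterWeight y) := by
  have := quarterWeight_pos x
  have := quarterWeight_pos y
  have := hx.const_nonneg
  calc h * |x - y| * |f x * f y| ≤ h * (|x| + |y|) * |f x * f y| := by
        gcongr
        exact abs_sub x y
    _ = h * |x| * |f x| * |f y| + |f x| * (h * |y| * |f y|) := by rw [abs_mul]; ring
    _ ≤ C * quarterWeight x * (C / quarterWeight y) +
          C / quarterWeight x * (C * quarterWeight y) := by
        gcongr ?_ * ?_ + ?_ * ?_
        exacts [hx.scale_mul_abs_le, hy.abs_le_div, hx.abs_le_div, hy.scale_mul_abs_le]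
    _ = _ := by unfold powRatio; ring

theorem scale_mul_abs_sub_mul_abs_mul_deriv_le (hh : 0 ≤ h) (hx : AiryBounds C h f f' x)
    (hy : AiryBounds C h f f' y) : h * |x - y| * |f x * f' y| ≤
      2 * C ^ 2 * powRatio 3 (quarterWeight x) (quarterWeight y) := by
  have ha := quarterWeight_pos x
  have hb := quarterWeight_pos y
  have hC := hx.const_nonneg
  have h_ratio := mul_le_powRatio_three ha hb
  calc h * |x - y| * |f x * f' y| ≤ h * (|x| + |y|) * |f x * f' y| := by
        gcongr
        exact abs_sub x y
    _ = h * |x| * |f x| * |f' y| + |f x| * (h * |y| * |f' y|) := by rw [abs_mul]; ring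
    _ ≤ C * quarterWeight x * (C * quarterWeight y) +
          C / quarterWeight x * (C * quarterWeight y ^ 3) := by
        gcongr ?_ * ?_ + ?_ * ?_
        exacts [hx.scale_mul_abs_le, hy.abs_deriv_le, hx.abs_le_div, hy.scale_mul_abs_deriv_le]
    _ = C ^ 2 * (quarterWeight x * quarterWeight y + quarterWeight y ^ 3 / quarterWeight x) := by
        ring
    _ ≤ C ^ 2 * (powRatio 3 (quarterWeight x) (quarterWeight y) +
          powRatio 3 (quarterWeight x) (quarterWeight y)) := by
        gcongr
        exact le_add_of_nonneg_left (by positivity)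
    _ = _ := by ring

theorem abs_edgeKernel_le (hh : 0 ≤ h) (hxy : x ≠ y) (hx : AiryBounds C h f f' x)
    (hy : AiryBounds C h f f' y) : |edgeKernel h f f' x y| ≤
      3 / 2 * C ^ 2 * (powRatio 1 (quarterWeight x) (quarterWeight y) / |x - y|) := by
  have h_dist : 0 < |x - y| := abs_pos.2 (sub_ne_zero.2 hxy)
  have h_scale := hx.scale_mul_abs_sub_mul_abs_mul_le hh hy
  rw [mul_right_comm, ← le_div_iff₀ h_dist] at h_scale
  have h_half : |h / 2 * (f x * f y)| = h * |f x * f y| / 2 := by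
    rw [abs_mul, abs_of_nonneg (by positivity)]
    ring
  calc |edgeKernel h f f' x y|
      ≤ |f x * f' y - f' x * f y| / |x - y| + h * |f x * f y| / 2 := by
        rw [← abs_div, ← h_half]
        exact abs_sub _ _
    _ ≤ C ^ 2 * powRatio 1 (quarterWeight x) (quarterWeight y) / |x - y| +
          C ^ 2 * powRatio 1 (quarterWeight x) (quarterWeight y) / |x - y| / 2 := by
        gcongr
        exact hx.abs_wronskian_le hy
    _ = _ := by ring

theorem abs_deriv_edgeKernel_le (hh : 0 ≤ h) (hxy : x ≠ y) (hx : AiryBounds C h f f' x)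
    (hy : AiryBounds C h f f' y) (hf : HasDerivAt f (f' y) y)
    (hf' : HasDerivAt f' (softEdgePotential h y * f y) y) : |deriv (edgeKernel h f f' x) y| ≤
      C ^ 2 * (powRatio 1 (quarterWeight x) (quarterWeight y) / |x - y| ^ 2 +
        3 * (powRatio 3 (quarterWeight x) (quarterWeight y) / |x - y|)) := by
  have h_dist : 0 < |x - y| := abs_pos.2 (sub_ne_zero.2 hxy)
  have h_scale := hx.scale_mul_abs_sub_mul_abs_mul_deriv_le hh hy
  rw [mul_right_comm, ← le_div_iff₀ h_dist] at h_scale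
  have h_half : |h / 2 * (f x * f' y)| = h * |f x * f' y| / 2 := by
    rw [abs_mul, abs_of_nonneg (by positivity)]
    ring
  rw [(hasDerivAt_edgeKernel hf hf' hxy).deriv]
  calc _ ≤ |f x * (softEdgePotential h y * f y) - f' x * f' y| / |x - y| +
          |f x * f' y - f' x * f y| / |x - y| ^ 2 + h * |f x * f' y| / 2 := by
        rw [← abs_div, ← abs_pow, ← abs_div, ← h_half]
        exact (abs_sub _ _).trans (by gcongr; exact abs_add_le _ _)
    _ ≤ 2 * C ^ 2 * powRatio 3 (quarterWeight x) (quarterWeight y) / |x - y| +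
          C ^ 2 * powRatio 1 (quarterWeight x) (quarterWeight y) / |x - y| ^ 2 +
          2 * C ^ 2 * powRatio 3 (quarterWeight x) (quarterWeight y) / |x - y| / 2 := by
        gcongr
        exacts [hx.abs_potential_wronskian_le hy, hx.abs_wronskian_le hy]
    _ = _ := by ring

theorem abs_edgeKernel_le_Ghat (hh : 0 ≤ h) (hxy : x ≠ y) (hx_ne : x ≠ 0) (hy_ne : y ≠ 0)
    (hx : AiryBounds C h f f' x) (hy : AiryBounds C h f f' y) :
    |edgeKernel h f f' x y| ≤ 3 * C ^ 2 * Ghat (-1 / 4) (1 / 4) 1 x y := by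
  have h_ratio := powRatio_one_quarterWeight_mul_le 1 hx_ne hy_ne
  rw [Real.rpow_neg_one, ← div_eq_mul_inv] at h_ratio
  calc |edgeKernel h f f' x y|
      ≤ 3 / 2 * C ^ 2 * (powRatio 1 (quarterWeight x) (quarterWeight y) / |x - y|) :=
        hx.abs_edgeKernel_le hh hxy hy
    _ ≤ 3 / 2 * C ^ 2 * (2 * Ghat (-1 / 4) (1 / 4) 1 x y) := by gcongr
    _ = _ := by ring

theorem abs_deriv_edgeKernel_le_Ghat (hh : 0 ≤ h) (hxy : x ≠ y) (hx_ne : x ≠ 0) (hy_ne : y ≠ 0)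
    (hx : AiryBounds C h f f' x) (hy : AiryBounds C h f f' y) (hf : HasDerivAt f (f' y) y)
    (hf' : HasDerivAt f' (softEdgePotential h y * f y) y) : |deriv (edgeKernel h f f' x) y| ≤
      9 * C ^ 2 * (Ghat (-1 / 4) (1 / 4) 2 x y + Ghat (-3 / 4) (1 / 4) 1 x y) := by
  have h_one := powRatio_one_quarterWeight_mul_le 2 hx_ne hy_ne
  rw [Real.rpow_neg (abs_nonneg _), Real.rpow_two, ← div_eq_mul_inv] at h_one
  have h_three := powRatio_three_quarterWeight_mul_le hx_ne hy_ne hxy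
  rw [Real.rpow_neg_one, ← div_eq_mul_inv] at h_three
  have h_nonneg := Ghat_nonneg (-1 / 4) (1 / 4) 2 x y
  calc |deriv (edgeKernel h f f' x) y|
      ≤ C ^ 2 * (powRatio 1 (quarterWeight x) (quarterWeight y) / |x - y| ^ 2 +
          3 * (powRatio 3 (quarterWeight x) (quarterWeight y) / |x - y|)) :=
        hx.abs_deriv_edgeKernel_le hh hxy hy hf hf'
    _ ≤ C ^ 2 * (9 * (Ghat (-1 / 4) (1 / 4) 2 x y + Ghat (-3 / 4) (1 / 4) 1 x y)) := by
        gcongr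
        linarith
    _ = _ := by ring

end AiryBounds

end EdgeKernel

/-! ### Oscillator functions -/

section Oscillator

open Polynomial (hermite derivative aeval)

open scoped Polynomial

theorem derivative_hermite_succ (n : ℕ) :
    derivative (hermite (n + 1)) = ((n : ℤ[X]) + 1) * hermite n := by
  induction n with
  | zero => simp
  | succ n ih =>
    have h_rec := Polynomial.hermite_succ n
    have h_const : derivative ((n : ℤ[X]) + 1) = 0 := by simp
    rw [Polynomial.hermite_succ (n + 1), Polynomial.derivative_sub, Polynomial.derivative_mul, ih,
      Polynomial.derivative_mul, h_const, Polynomial.derivative_X]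
    push_cast
    linear_combination (-(n : ℤ[X]) - 1) * h_rec

theorem hermiteP_eq_aeval (m : ℕ) (x : ℝ) : hermiteP m x = aeval x (hermite m) := by
  have h_gauss : (fun t : ℝ ↦ Real.exp (-t ^ 2 / 2)) = fun t ↦ Real.exp (-(t ^ 2 / 2)) := by
    simp only [neg_div]
  rw [Polynomial.hermite_eq_deriv_gaussian', hermiteP, iteratedDeriv_eq_iterate, h_gauss]
  ring

theorem hermiteP_succ (m : ℕ) (x : ℝ) :
    hermiteP (m + 1) x = x * hermiteP m x - aeval x (derivative (hermite m)) := by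
  simp only [hermiteP_eq_aeval, Polynomial.hermite_succ, map_sub, map_mul, Polynomial.aeval_X]

theorem hasDerivAt_hermiteP (m : ℕ) (x : ℝ) :
    HasDerivAt (hermiteP m) (x * hermiteP m x - hermiteP (m + 1) x) x := by
  rw [funext (hermiteP_eq_aeval m), hermiteP_succ, hermiteP_eq_aeval, sub_sub_cancel]
  exact (hermite m).hasDerivAt_aeval x

theorem hasDerivAt_hermiteP_succ (m : ℕ) (x : ℝ) :
    HasDerivAt (hermiteP (m + 1)) ((m + 1) * hermiteP m x) x := by
  rw [funext (hermiteP_eq_aeval (m + 1)), hermiteP_eq_aeval]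
  refine ((hermite (m + 1)).hasDerivAt_aeval x).congr_deriv ?_
  rw [derivative_hermite_succ]
  simp

theorem tendsto_aeval_mul_exp_neg_sq_div_four (p : ℤ[X]) :
    Tendsto (fun x : ℝ ↦ aeval x p * Real.exp (-x ^ 2 / 4)) atTop (𝓝 0) := by
  have h_lim : Tendsto (fun x : ℝ ↦ Real.exp 1 * |aeval x p / Real.exp x|) atTop (𝓝 0) := by
    simpa [Polynomial.aeval_def, Polynomial.eval₂_eq_eval_map] using
      (Polynomial.tendsto_div_exp_atTop (p.map (algebraMap ℤ ℝ))).abs.const_mul (Real.exp 1)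
  refine squeeze_zero_norm (fun x ↦ ?_) h_lim
  have h_exp : Real.exp (-x ^ 2 / 4) ≤ Real.exp 1 / Real.exp x := by
    rw [← Real.exp_sub, Real.exp_le_exp]
    linarith [sq_nonneg (x - 2)]
  calc ‖aeval x p * Real.exp (-x ^ 2 / 4)‖ = |aeval x p| * Real.exp (-x ^ 2 / 4) := by
        rw [norm_mul, Real.norm_eq_abs, Real.norm_eq_abs, Real.abs_exp]
    _ ≤ |aeval x p| * (Real.exp 1 / Real.exp x) := by gcongr
    _ = Real.exp 1 * |aeval x p / Real.exp x| := by rw [abs_div, Real.abs_exp]; ring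

/-- The normalisation constant of `osc m`. -/
noncomputable def oscConst (m : ℕ) : ℝ :=
  (2 * Real.pi) ^ (-(1 : ℝ) / 4) * (m.factorial : ℝ) ^ (-(1 : ℝ) / 2)

theorem osc_eq (m : ℕ) (x : ℝ) :
    osc m x = oscConst m * (hermiteP m x * Real.exp (-x ^ 2 / 4)) := by
  rw [osc, oscConst]
  ring

theorem sqrt_mul_oscConst_succ (m : ℕ) : √((m : ℝ) + 1) * oscConst (m + 1) = oscConst m := by
  have hm : 0 < (m : ℝ) + 1 := by positivity
  have h_root : ((m : ℝ) + 1) ^ (-(1 : ℝ) / 2) = (√((m : ℝ) + 1))⁻¹ := by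
    rw [neg_div, Real.rpow_neg hm.le, Real.sqrt_eq_rpow]
  rw [oscConst, oscConst, Nat.factorial_succ, Nat.cast_mul, Nat.cast_succ,
    Real.mul_rpow hm.le (by positivity), h_root]
  field_simp

theorem tendsto_osc_atTop (m : ℕ) : Tendsto (osc m) atTop (𝓝 0) := by
  simpa [← hermiteP_eq_aeval, ← osc_eq] using
    (tendsto_aeval_mul_exp_neg_sq_div_four (hermite m)).const_mul (oscConst m)

theorem tendsto_mul_osc_atTop (m : ℕ) : Tendsto (fun x ↦ x * osc m x) atTop (𝓝 0) := by
  have h_lim := (tendsto_aeval_mul_exp_neg_sq_div_four (Polynomial.X * hermite m)).const_mul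
    (oscConst m)
  rw [mul_zero] at h_lim
  refine h_lim.congr fun x ↦ ?_
  rw [map_mul, Polynomial.aeval_X, ← hermiteP_eq_aeval, osc_eq]
  ring

theorem hasDerivAt_exp_neg_sq_div_four (x : ℝ) : HasDerivAt (fun x : ℝ ↦ Real.exp (-x ^ 2 / 4))
    (Real.exp (-x ^ 2 / 4) * (-(x / 2))) x := by
  refine (((hasDerivAt_pow 2 x).fun_neg.div_const 4).exp).congr_deriv ?_
  norm_num
  ring

theorem hasDerivAt_osc (m : ℕ) (x : ℝ) :
    HasDerivAt (osc m) (x / 2 * osc m x - √((m : ℝ) + 1) * osc (m + 1) x) x := by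
  rw [funext (osc_eq m)]
  refine (((hasDerivAt_hermiteP m x).fun_mul (hasDerivAt_exp_neg_sq_div_four x)).const_mul
    _).congr_deriv ?_
  rw [osc_eq (m + 1)]
  linear_combination hermiteP (m + 1) x * Real.exp (-x ^ 2 / 4) * sqrt_mul_oscConst_succ m

theorem hasDerivAt_osc_succ (m : ℕ) (x : ℝ) :
    HasDerivAt (osc (m + 1)) (√((m : ℝ) + 1) * osc m x - x / 2 * osc (m + 1) x) x := by
  rw [funext (osc_eq (m + 1))]
  refine (((hasDerivAt_hermiteP_succ m x).fun_mul (hasDerivAt_exp_neg_sq_div_four x)).const_mul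
    _).congr_deriv ?_
  have h_sq : √((m : ℝ) + 1) ^ 2 = m + 1 := Real.sq_sqrt (by positivity)
  rw [osc_eq m, ← sqrt_mul_oscConst_succ m]
  linear_combination
    -(oscConst (m + 1) * hermiteP m x * Real.exp (-x ^ 2 / 4)) * h_sq

theorem hasDerivAt_deriv_osc (m : ℕ) (x : ℝ) :
    HasDerivAt (deriv (osc m)) ((x ^ 2 / 4 - m - 1 / 2) * osc m x) x := by
  rw [funext fun x ↦ (hasDerivAt_osc m x).deriv]
  refine ((((hasDerivAt_id' x).div_const 2).fun_mul (hasDerivAt_osc m x)).fun_sub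
    ((hasDerivAt_osc_succ m x).const_mul _)).congr_deriv ?_
  have h_sq : √((m : ℝ) + 1) ^ 2 = m + 1 := Real.sq_sqrt (by positivity)
  linear_combination -(osc m x) * h_sq

theorem tendsto_deriv_osc_atTop (m : ℕ) : Tendsto (deriv (osc m)) atTop (𝓝 0) := by
  have h_lim := ((tendsto_mul_osc_atTop m).div_const 2).sub
    ((tendsto_osc_atTop (m + 1)).const_mul √((m : ℝ) + 1))
  rw [zero_div, mul_zero, sub_zero] at h_lim
  refine h_lim.congr fun x ↦ ?_
  rw [(hasDerivAt_osc m x).deriv]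
  ring

theorem deriv_osc_succ_zero (m : ℕ) : deriv (osc (m + 1)) 0 = √((m : ℝ) + 1) * osc m 0 := by
  simpa using (hasDerivAt_osc_succ m 0).deriv

theorem mul_osc_add_two_zero_sq (m : ℕ) : (m + 2) * osc (m + 2) 0 ^ 2 = (m + 1) * osc m 0 ^ 2 := by
  have h_deriv := (hasDerivAt_osc (m + 1) 0).unique (hasDerivAt_osc_succ m 0)
  have h_sq : √((m : ℝ) + 1) ^ 2 = m + 1 := Real.sq_sqrt (by positivity)
  have h_sq_succ : √((m : ℝ) + 2) ^ 2 = m + 2 := Real.sq_sqrt (by positivity)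
  rw [zero_div, zero_mul, zero_sub, sub_zero, Nat.cast_succ, add_assoc (m : ℝ),
    one_add_one_eq_two] at h_deriv
  rw [← h_sq, ← h_sq_succ, ← mul_pow, ← mul_pow, ← h_deriv, neg_sq]

theorem osc_zero_zero_pow_four_le : osc 0 0 ^ 4 ≤ 1 := by
  have h_base : (2 * Real.pi) ^ (-(1 : ℝ) / 4) ≤ 1 :=
    Real.rpow_le_one_of_one_le_of_nonpos (by linarith [Real.pi_gt_three]) (by norm_num)
  have h_eq : osc 0 0 = (2 * Real.pi) ^ (-(1 : ℝ) / 4) := by simp [osc, hermiteP]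
  rw [h_eq]
  exact pow_le_one₀ (by positivity) h_base

theorem osc_one_zero : osc 1 0 = 0 := by simp [osc, hermiteP_succ]

theorem osc_zero_pow_four_mul_le (m : ℕ) : osc m 0 ^ 4 * (m + 1) ≤ 1 := by
  induction m using Nat.twoStepInduction with
  | zero => simpa using osc_zero_zero_pow_four_le
  | one => simp [osc_one_zero]
  | more m ih _ =>
    have h_rec : osc (m + 2) 0 ^ 2 = (m + 1) / (m + 2) * osc m 0 ^ 2 := by
      rw [div_mul_eq_mul_div, eq_div_iff (by positivity), mul_comm]
      exact mul_osc_add_two_zero_sq m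
    have h_ratio : ((m : ℝ) + 1) * (m + 3) / (m + 2) ^ 2 ≤ 1 := by
      rw [div_le_one (by positivity)]
      linarith
    calc osc (m + 2) 0 ^ 4 * (((m + 2 : ℕ) : ℝ) + 1)
        = osc m 0 ^ 4 * (m + 1) * ((m + 1) * (m + 3) / (m + 2) ^ 2) := by
          rw [(by ring : osc (m + 2) 0 ^ 4 = (osc (m + 2) 0 ^ 2) ^ 2), h_rec]
          push_cast
          field_simp
          ring
      _ ≤ 1 := mul_le_one₀ ih (by positivity) h_ratio

end Oscillator

/-! ### The functions `ψ_n` as soft-edge solutions -/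

section PsiN

variable {n m : ℕ} {z : ℝ}

theorem osc_zero_sq_mul_le (hz : z ^ 12 ≤ m + 1) : osc m 0 ^ 2 * z ^ 6 ≤ 1 := by
  refine le_of_sq_le_sq ?_ zero_le_one
  calc (osc m 0 ^ 2 * z ^ 6) ^ 2 = osc m 0 ^ 4 * z ^ 12 := by ring
    _ ≤ osc m 0 ^ 4 * (m + 1) := by gcongr
    _ ≤ 1 ^ 2 := by rw [one_pow]; exact osc_zero_pow_four_mul_le m

theorem deriv_osc_zero_sq_le (hz : 0 < z) (hn : (n : ℝ) = z ^ 12) :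
    deriv (osc n) 0 ^ 2 ≤ z ^ 6 := by
  have hn_pos : 0 < (n : ℝ) := hn ▸ pow_pos hz 12
  obtain ⟨m, rfl⟩ := Nat.exists_eq_succ_of_ne_zero (Nat.cast_pos.1 hn_pos).ne'
  rw [Nat.cast_succ] at hn
  rw [deriv_osc_succ_zero, mul_pow, Real.sq_sqrt (by positivity), hn]
  calc z ^ 12 * osc m 0 ^ 2 = z ^ 6 * (osc m 0 ^ 2 * z ^ 6) := by ring
    _ ≤ z ^ 6 := mul_le_of_le_one_right (by positivity) (osc_zero_sq_mul_le hn.ge)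

theorem isSoftEdgeSolution_rescaled_osc (hz : 1 ≤ z) (hn : (n : ℝ) = z ^ 12) :
    IsSoftEdgeSolution (1 / z ^ 4) (fun x ↦ z * osc n (2 * z ^ 6 + x / z ^ 2))
      (fun x ↦ z⁻¹ * deriv (osc n) (2 * z ^ 6 + x / z ^ 2)) := by
  have hz_pos : 0 < z := zero_lt_one.trans_le hz
  have h_affine x : HasDerivAt (fun x ↦ 2 * z ^ 6 + x / z ^ 2) (1 / z ^ 2) x :=
    ((hasDerivAt_id' x).div_const (z ^ 2)).const_add (2 * z ^ 6)
  have h_affine_lim : Tendsto (fun x ↦ 2 * z ^ 6 + x / z ^ 2) atTop atTop :=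
    tendsto_atTop_add_const_left _ _ (tendsto_id.atTop_div_const (by positivity))
  have h_center : 2 * z ^ 6 + -(2 / (1 / z ^ 4) ^ 2) / z ^ 2 = 0 := by
    field_simp
    ring
  constructor
  case scale_pos => positivity
  case scale_le_one => exact div_le_one_of_le₀ (one_le_pow₀ hz) (by positivity)
  case hasDerivAt =>
    intro x
    refine (((hasDerivAt_osc n _).differentiableAt.hasDerivAt.comp x
      (h_affine x)).const_mul z).congr_deriv ?_
    field_simp
  case hasDerivAt_deriv =>
    intro x
    refine (((hasDerivAt_deriv_osc n _).comp x (h_affine x)).const_mul z⁻¹).congr_deriv ?_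
    rw [hn, softEdgePotential]
    field_simp
    ring
  case tendsto_zero => simpa using ((tendsto_osc_atTop n).comp h_affine_lim).const_mul z
  case tendsto_deriv_zero =>
    simpa using ((tendsto_deriv_osc_atTop n).comp h_affine_lim).const_mul z⁻¹
  case sq_center_le =>
    rw [h_center, le_div_iff₀ (by positivity)]
    linarith [osc_zero_sq_mul_le (m := n) (z := z) (by linarith)]
  case deriv_sq_center_le =>
    rw [h_center, one_div_one_div, mul_pow, inv_pow, inv_mul_le_iff₀ (by positivity)]
    linarith [deriv_osc_zero_sq_le hz_pos hn]

theorem isSoftEdgeSolution_psiN (hn : 1 ≤ n) :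
    IsSoftEdgeSolution (1 / (n : ℝ) ^ ((1 : ℝ) / 3)) (psiN n) (deriv (psiN n)) := by
  have hn_one : (1 : ℝ) ≤ n := Nat.one_le_cast.2 hn
  have hn_nonneg : (0 : ℝ) ≤ n := Nat.cast_nonneg n
  have h_pow (k : ℕ) : ((n : ℝ) ^ ((1 : ℝ) / 12)) ^ k = (n : ℝ) ^ ((k : ℝ) / 12) := by
    rw [← Real.rpow_mul_natCast hn_nonneg, one_div_mul_eq_div]
  have h_one_le : 1 ≤ (n : ℝ) ^ ((1 : ℝ) / 12) := Real.one_le_rpow hn_one (by norm_num)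
  have h_solution := isSoftEdgeSolution_rescaled_osc (n := n) h_one_le (by rw [h_pow]; norm_num)
  have h_psi : psiN n = fun x ↦ (n : ℝ) ^ ((1 : ℝ) / 12) *
      osc n (2 * ((n : ℝ) ^ ((1 : ℝ) / 12)) ^ 6 + x / ((n : ℝ) ^ ((1 : ℝ) / 12)) ^ 2) := by
    funext x
    rw [psiN, psiUp, h_pow, h_pow, Real.sqrt_eq_rpow, neg_div, Real.rpow_neg hn_nonneg,
      div_eq_inv_mul x]
    norm_num
  have h_scale : ((n : ℝ) ^ ((1 : ℝ) / 12)) ^ 4 = (n : ℝ) ^ ((1 : ℝ) / 3) := by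
    rw [h_pow]
    norm_num
  rw [← h_psi, h_scale] at h_solution
  rwa [funext fun x ↦ (h_solution.hasDerivAt x).deriv]

theorem airyBounds_psiN {x : ℝ} (hn : 1 ≤ n) (hx : -(2 * (n : ℝ) ^ ((2 : ℝ) / 3)) ≤ x) :
    AiryBounds (72 * Real.exp 34) (1 / (n : ℝ) ^ ((1 : ℝ) / 3)) (psiN n) (deriv (psiN n)) x := by
  refine (isSoftEdgeSolution_psiN hn).airyBounds ?_
  rwa [div_pow, one_pow, div_div_eq_mul_div, div_one, ← Real.rpow_mul_natCast (Nat.cast_nonneg n),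
    Nat.cast_two, one_div_mul_eq_div]

theorem KAiN_eq_edgeKernel {x y : ℝ} (hxy : x ≠ y) : KAiN n x y =
    edgeKernel (1 / (n : ℝ) ^ ((1 : ℝ) / 3)) (psiN n) (deriv (psiN n)) x y := by
  rw [KAiN, if_neg hxy, edgeKernel, div_div, mul_comm _ (2 : ℝ)]

theorem deriv_KAiN_eq_deriv_edgeKernel {x y : ℝ} (hxy : x ≠ y) : deriv (fun z ↦ KAiN n x z) y =
    deriv (edgeKernel (1 / (n : ℝ) ^ ((1 : ℝ) / 3)) (psiN n) (deriv (psiN n)) x) y :=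
  EventuallyEq.deriv_eq <| (eventually_ne_nhds hxy.symm).mono fun _ hz ↦ KAiN_eq_edgeKernel hz.symm

end PsiN

/-- uniform bounds on the finite-`n` Airy kernel and its `y`-derivative. -/
theorem KAiN_bounds :
    ∃ C : ℝ, 0 < C ∧ ∀ n : ℕ, 1 ≤ n → ∀ x y : ℝ,
      -(2 * (n : ℝ) ^ ((2:ℝ)/3)) ≤ x → -(2 * (n : ℝ) ^ ((2:ℝ)/3)) ≤ y →
      x ≠ y → x ≠ 0 → y ≠ 0 →
      |KAiN n x y| ≤ C * Ghat (-(1:ℝ)/4) ((1:ℝ)/4) 1 x y ∧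
      |deriv (fun z => KAiN n x z) y| ≤
        C * (Ghat (-(1:ℝ)/4) ((1:ℝ)/4) 2 x y + Ghat (-(3:ℝ)/4) ((1:ℝ)/4) 1 x y) := by
  refine ⟨9 * (72 * Real.exp 34) ^ 2, by positivity, fun n hn x y hx hy hxy hx_ne hy_ne ↦ ?_⟩
  have h_solution := isSoftEdgeSolution_psiN hn
  have h_scale := h_solution.scale_pos.le
  have hx_bounds := airyBounds_psiN hn hx
  have hy_bounds := airyBounds_psiN hn hy
  rw [KAiN_eq_edgeKernel hxy, deriv_KAiN_eq_deriv_edgeKernel hxy]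
  constructor
  · refine (hx_bounds.abs_edgeKernel_le_Ghat h_scale hxy hx_ne hy_ne hy_bounds).trans ?_
    gcongr
    exacts [Ghat_nonneg _ _ _ _ _, by norm_num]
  · exact hx_bounds.abs_deriv_edgeKernel_le_Ghat h_scale hxy hx_ne hy_ne hy_bounds
      (h_solution.hasDerivAt y) (h_solution.hasDerivAt_deriv y)
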